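/- Let q ∈ [1,2), η : [0,T] → ℝ continuous of finite q-variation, α of finite p-variation with 1/p + 1/q > 1, and Γ_t := ∫_0^t α_r dη_r. Let y be a continuous path of finite p-variation satisfying the Young equation dy_t = −α_t y_t dη_t (i.e. y_t = y_0 − ∫_0^t α_r y_r dη_r). Then y_t = y_0 exp(−Γ_t) for all t; in particular if y_0 = 0 then y ≡ 0. -/

import Mathlib

open Finset Set

/-- The set of partition sums `(∑ |X_{t_{i+1}} - X_{t_i}|^p)^(1/p)` over partitions of `[s, T]`. -/
def pVarSet (p s T : ℝ) (X : ℝ → ℝ) : Set ℝ :=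
  { v | ∃ (n : ℕ) (t : ℕ → ℝ), Monotone t ∧ t 0 = s ∧ (∀ i ≥ n, t i = T) ∧
      v = (∑ i ∈ Finset.range n, |X (t (i + 1)) - X (t i)| ^ p) ^ (1 / p) }

/-- The `p`-variation of `X` on `[s, T]`. -/
noncomputable def pVar (p s T : ℝ) (X : ℝ → ℝ) : ℝ := sSup (pVarSet p s T X)

/-- `X` has finite `p`-variation on `[s, T]`. -/
def HasFinitePVar (p s T : ℝ) (X : ℝ → ℝ) : Prop := BddAbove (pVarSet p s T X)

/-- Supremum norm of `X` on `[s, T]`. -/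
noncomputable def supNorm (s T : ℝ) (X : ℝ → ℝ) : ℝ :=
  sSup ((fun t => |X t|) '' Set.Icc s T)

/-- `I` is the Young integral `∫_s^T X dY`: the limit of left-point Riemann–Stieltjes sums
over partitions of `[s, T]` as the mesh tends to `0`. -/
def IsYoungIntegral (s T : ℝ) (X Y : ℝ → ℝ) (I : ℝ) : Prop :=
  ∀ ε > 0, ∃ δ > 0, ∀ (n : ℕ) (t : ℕ → ℝ), Monotone t → t 0 = s → (∀ i ≥ n, t i = T) →
    (∀ i < n, t (i + 1) - t i < δ) →
    |(∑ i ∈ Finset.range n, X (t i) * (Y (t (i + 1)) - Y (t i))) - I| < ε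

/-!
Call a function `f s t` of an interval negligible if its absolute sums over partitions vanish with
the mesh. By a Saks–Henstock argument, `F t - F s - X s * (Y t - Y s)` is negligible whenever `F` is
the indefinite Young integral `∫ X dY`: on any set of intervals of a partition the left-point term
may be traded for a fine Riemann sum, so errors of one sign cannot accumulate. A continuous path of
finite `q`-variation, `q < 2`, has negligible squared increments, and integrals against it inherit
this property. So Young differentials obey the ordinary chain and product rules modulo negligible
terms, and `d(y exp Γ) = 0` forces `y exp Γ` to be constant.
-/

open Filter Topology Bornology

/-- A partition of `[a, b]`, built from left to right by appending subintervals, which may be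
degenerate. -/
inductive IntervalPartition (a : ℝ) : ℝ → Type
  | nil : IntervalPartition a a
  | snoc {b c : ℝ} (π : IntervalPartition a b) (hbc : b ≤ c) : IntervalPartition a c

namespace IntervalPartition

variable {a b c : ℝ} {f g : ℝ → ℝ → ℝ}

/-- The largest length of a subinterval. -/
noncomputable def mesh : {b : ℝ} → IntervalPartition a b → ℝ
  | _, nil => 0
  | _, snoc (b := b) (c := c) π _ => max π.mesh (c - b)

/-- The sum of a function of two endpoints over the subintervals of a partition. -/
noncomputable def sum (f : ℝ → ℝ → ℝ) : {b : ℝ} → IntervalPartition a b → ℝ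
  | _, nil => 0
  | _, snoc (b := b) (c := c) π _ => π.sum f + f b c

/-- Concatenation of partitions of adjacent intervals. -/
def append (π : IntervalPartition a b) : {c : ℝ} → IntervalPartition b c → IntervalPartition a c
  | _, nil => π
  | _, snoc ρ h => (π.append ρ).snoc h

/-- Partitions of `[a, b]` becoming arbitrarily fine. -/
noncomputable def meshToZero (a b : ℝ) : Filter (IntervalPartition a b) := comap mesh (𝓝 0)

lemma le (π : IntervalPartition a b) : a ≤ b := by
  induction π with
  | nil => exact le_rfl
  | snoc _ hbc ih => exact ih.trans hbc

lemma mesh_nonneg (π : IntervalPartition a b) : 0 ≤ π.mesh := by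
  induction π with
  | nil => exact le_rfl
  | snoc _ _ ih => exact le_max_of_le_left ih

lemma mesh_append (π : IntervalPartition a b) (ρ : IntervalPartition b c) :
    (π.append ρ).mesh = max π.mesh ρ.mesh := by
  induction ρ with
  | nil => exact (max_eq_left π.mesh_nonneg).symm
  | snoc ρ _ ih => simp only [append, mesh, ih, max_assoc]

lemma sum_append (π : IntervalPartition a b) (ρ : IntervalPartition b c) :
    (π.append ρ).sum f = π.sum f + ρ.sum f := by
  induction ρ with
  | nil => exact (add_zero _).symm
  | snoc ρ _ ih => simp only [append, sum, ih, add_assoc]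

lemma sum_add (π : IntervalPartition a b) :
    π.sum (fun s t => f s t + g s t) = π.sum f + π.sum g := by
  induction π with
  | nil => exact (add_zero 0).symm
  | snoc π _ ih => simp only [sum, ih]; ring

lemma sum_const_mul (π : IntervalPartition a b) (C : ℝ) :
    π.sum (fun s t => C * f s t) = C * π.sum f := by
  induction π with
  | nil => exact (mul_zero C).symm
  | snoc π _ ih => simp only [sum, ih, mul_add]

lemma sum_le_sum (π : IntervalPartition a b)
    (h : ∀ s t, a ≤ s → s ≤ t → t ≤ b → t - s ≤ π.mesh → f s t ≤ g s t) :
    π.sum f ≤ π.sum g := by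
  induction π with
  | nil => exact le_rfl
  | snoc π hbc ih =>
    exact add_le_add
      (ih fun s t has hst htb hlen => h s t has hst (htb.trans hbc) (le_max_of_le_left hlen))
      (h _ _ π.le hbc le_rfl (le_max_right _ _))

lemma sum_nonneg (π : IntervalPartition a b) (h : ∀ s t, 0 ≤ f s t) : 0 ≤ π.sum f := by
  induction π with
  | nil => exact le_rfl
  | snoc _ _ ih => exact add_nonneg ih (h _ _)

lemma abs_sub_le_sum (F : ℝ → ℝ) (π : IntervalPartition a b) :
    |F b - F a| ≤ π.sum fun s t => |F t - F s| := by
  induction π with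
  | nil => simp [sum]
  | snoc π _ ih =>
    rw [sum, add_comm]
    exact (abs_sub_le _ _ _).trans (add_le_add_right ih _)

lemma exists_sequence (π : IntervalPartition a b) :
    ∃ (n : ℕ) (t : ℕ → ℝ), Monotone t ∧ t 0 = a ∧ (∀ i ≥ n, t i = b) ∧
      (∀ i < n, t (i + 1) - t i ≤ π.mesh) ∧
      ∀ f, π.sum f = ∑ i ∈ Finset.range n, f (t i) (t (i + 1)) := by
  induction π with
  | nil => exact ⟨0, fun _ => a, monotone_const, rfl, by simp, by simp, by simp [sum]⟩
  | @snoc b c π hbc ih =>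
    obtain ⟨n, t, ht_mono, ht_zero, ht_last, ht_mesh, ht_sum⟩ := ih
    have ht_n : t n = b := ht_last n le_rfl
    let u : ℕ → ℝ := fun i => if i ≤ n then t i else c
    have hu_of_le {i : ℕ} (hi : i ≤ n) : u i = t i := if_pos hi
    have hu_of_gt {i : ℕ} (hi : n < i) : u i = c := if_neg hi.not_ge
    refine ⟨n + 1, u, monotone_nat_of_le_succ fun i => ?_, by simpa [u] using ht_zero,
      fun i hi => hu_of_gt hi, fun i hi => ?_, fun f => ?_⟩
    · rcases lt_trichotomy i n with hi | rfl | hi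
      · simpa only [hu_of_le hi.le, hu_of_le hi] using ht_mono i.le_succ
      · simpa only [hu_of_le le_rfl, hu_of_gt i.lt_succ_self, ht_n] using hbc
      · rw [hu_of_gt hi, hu_of_gt (hi.trans i.lt_succ_self)]
    · rcases (Nat.lt_succ_iff.1 hi).lt_or_eq with hi | rfl
      · rw [hu_of_le hi.le, hu_of_le hi]
        exact le_max_of_le_left (ht_mesh i hi)
      · rw [hu_of_le le_rfl, hu_of_gt i.lt_succ_self, ht_n]
        exact le_max_right _ _
    · rw [Finset.sum_range_succ, hu_of_le le_rfl, hu_of_gt n.lt_succ_self, ht_n, sum, ht_sum]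
      congr 1
      refine Finset.sum_congr rfl fun i hi => ?_
      have hi := Finset.mem_range.1 hi
      rw [hu_of_le hi.le, hu_of_le hi]

lemma exists_mesh_le {δ : ℝ} (hδ : 0 ≤ δ) (n : ℕ) :
    ∀ {b : ℝ}, a ≤ b → b - a ≤ n * δ → ∃ π : IntervalPartition a b, π.mesh ≤ δ := by
  induction n with
  | zero =>
    intro b hab hb
    obtain rfl : b = a := by push_cast at hb; linarith
    exact ⟨nil, hδ⟩
  | succ n ih =>
    intro b hab hb
    push_cast at hb
    obtain ⟨π, hπ⟩ := ih (b := max a (b - δ)) (le_max_left _ _) (by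
      have : 0 ≤ n * δ := by positivity
      rcases max_choice a (b - δ) with h | h <;> rw [h] <;> linarith)
    exact ⟨π.snoc (max_le hab (sub_le_self b hδ)),
      max_le hπ (sub_le_comm.1 (le_max_right a (b - δ)))⟩

lemma exists_mesh_lt {δ : ℝ} (hδ : 0 < δ) (hab : a ≤ b) :
    ∃ π : IntervalPartition a b, π.mesh < δ := by
  obtain ⟨n, hn⟩ := exists_nat_ge ((b - a) / (δ / 2))
  obtain ⟨π, hπ⟩ := exists_mesh_le (half_pos hδ).le n hab ((div_le_iff₀ (half_pos hδ)).1 hn)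
  exact ⟨π, hπ.trans_lt (half_lt_self hδ)⟩

lemma eventually_meshToZero {P : IntervalPartition a b → Prop} :
    (∀ᶠ π in meshToZero a b, P π) ↔ ∃ δ > 0, ∀ π : IntervalPartition a b, π.mesh < δ → P π := by
  simp [meshToZero, (Metric.nhds_basis_ball.comap mesh).eventually_iff, abs_of_nonneg, mesh_nonneg]

lemma meshToZero_neBot (hab : a ≤ b) : (meshToZero a b).NeBot := by
  refine ⟨fun h => ?_⟩
  obtain ⟨δ, hδ, hP⟩ := eventually_meshToZero.1 (eventually_false_iff_eq_bot.2 h)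
  obtain ⟨π, hπ⟩ := exists_mesh_lt hδ hab
  exact hP π hπ

lemma tendsto_append :
    Tendsto (fun p : IntervalPartition a b × IntervalPartition b c => p.1.append p.2)
      (meshToZero a b ×ˢ meshToZero b c) (meshToZero a c) := by
  have hmesh {s t : ℝ} : Tendsto mesh (meshToZero s t) (𝓝 0) := tendsto_comap
  refine tendsto_comap_iff.2 ?_
  simpa only [Function.comp_def, mesh_append, max_self] using
    (hmesh.comp tendsto_fst).max (hmesh.comp tendsto_snd)

lemma tendsto_sum_sub {x y : ℝ} (hab : a ≤ b) (hx : Tendsto (sum f) (meshToZero a b) (𝓝 x))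
    (hy : Tendsto (sum f) (meshToZero a c) (𝓝 y)) :
    Tendsto (sum f) (meshToZero b c) (𝓝 (y - x)) := by
  have := meshToZero_neBot hab
  have h := (hy.comp (tendsto_append (b := b))).sub (hx.comp tendsto_fst)
  simp only [Function.comp_def, sum_append, add_sub_cancel_left] at h
  rwa [← Filter.map_snd_prod (meshToZero a b) (meshToZero b c), tendsto_map'_iff]

/-- The sums of `g` over the partitions of `[a, b]` of mesh less than `δ`. -/
def fineSums (g : ℝ → ℝ → ℝ) (δ a b : ℝ) : Set ℝ :=
  (fun π : IntervalPartition a b => π.sum g) '' {π | π.mesh < δ}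

lemma mem_fineSums_of_sub_lt {δ : ℝ} (hab : a ≤ b) (hδ : b - a < δ) :
    g a b ∈ fineSums g δ a b :=
  ⟨nil.snoc hab, max_lt ((sub_nonneg.2 hab).trans_lt hδ) hδ, zero_add _⟩

lemma add_mem_closure_fineSums {δ x y : ℝ} (hx : x ∈ closure (fineSums g δ a b))
    (hy : y ∈ closure (fineSums g δ b c)) : x + y ∈ closure (fineSums g δ a c) := by
  refine map_mem_closure₂ continuous_add hx hy ?_
  rintro _ ⟨π, hπ, rfl⟩ _ ⟨ρ, hρ, rfl⟩
  exact ⟨π.append ρ, (mesh_append π ρ).trans_lt (max_lt hπ hρ), sum_append π ρ⟩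

lemma mem_closure_fineSums_of_tendsto {δ x : ℝ} (hδ : 0 < δ) (hab : a ≤ b)
    (h : Tendsto (sum g) (meshToZero a b) (𝓝 x)) : x ∈ closure (fineSums g δ a b) := by
  have := meshToZero_neBot hab
  exact mem_closure_of_tendsto h
    (eventually_meshToZero.2 ⟨δ, hδ, fun π hπ => mem_image_of_mem _ hπ⟩)

/-- Where `e` is the error `F t - F s - g s t`, keep the term `g s t`; where `e` is zero, refine. -/
lemma sub_sum_mem_closure_fineSums {δ : ℝ} {F : ℝ → ℝ} {e : ℝ → ℝ → ℝ} (π : IntervalPartition a b)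
    (hπ : π.mesh < δ)
    (hF : ∀ s t, a ≤ s → s ≤ t → t ≤ b → F t - F s ∈ closure (fineSums g δ s t))
    (he : ∀ s t, e s t = F t - F s - g s t ∨ e s t = 0) :
    F b - F a - π.sum e ∈ closure (fineSums g δ a b) := by
  induction π with
  | nil => simpa [sum] using hF a a le_rfl le_rfl le_rfl
  | @snoc b c π hbc ih =>
    obtain ⟨hπ, hlen⟩ := max_lt_iff.1 hπ
    have hprefix := ih hπ fun s t has hst htb => hF s t has hst (htb.trans hbc)
    have hlast : F c - F b - e b c ∈ closure (fineSums g δ b c) := by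
      rcases he b c with h | h
      · rw [h, sub_sub_cancel]
        exact subset_closure (mem_fineSums_of_sub_lt hbc hlen)
      · rw [h, sub_zero]
        exact hF b c π.le hbc le_rfl
    convert add_mem_closure_fineSums hprefix hlast using 1
    rw [sum]
    ring

end IntervalPartition

open IntervalPartition

section Negligible

variable {a b : ℝ} {X Y F : ℝ → ℝ} {f g : ℝ → ℝ → ℝ}

/-- Functions of an interval whose absolute sums over partitions of `[a, b]` vanish with the mesh;
they can be discarded in computations with differentials. -/
def IsNegligible (a b : ℝ) (f : ℝ → ℝ → ℝ) : Prop :=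
  Tendsto (fun π => π.sum fun s t => |f s t|) (meshToZero a b) (𝓝 0)

lemma IsNegligible.of_abs_le_mul {C : ℝ} (hf : IsNegligible a b f)
    (h : ∀ s t, a ≤ s → s ≤ t → t ≤ b → |g s t| ≤ C * |f s t|) : IsNegligible a b g := by
  refine squeeze_zero (fun π => π.sum_nonneg fun _ _ => abs_nonneg _) (fun π => ?_)
    (by simpa only [mul_zero] using Tendsto.const_mul C hf)
  rw [← sum_const_mul]
  exact π.sum_le_sum fun s t has hst htb _ => h s t has hst htb

lemma IsNegligible.of_abs_le (hf : IsNegligible a b f)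
    (h : ∀ s t, a ≤ s → s ≤ t → t ≤ b → |g s t| ≤ |f s t|) : IsNegligible a b g :=
  hf.of_abs_le_mul (C := 1) (by simpa only [one_mul] using h)

lemma IsNegligible.add (hf : IsNegligible a b f) (hg : IsNegligible a b g) :
    IsNegligible a b fun s t => f s t + g s t := by
  refine squeeze_zero (fun π => π.sum_nonneg fun _ _ => abs_nonneg _) (fun π => ?_)
    (by simpa only [add_zero] using Tendsto.add hf hg)
  rw [← sum_add]
  exact π.sum_le_sum fun _ _ _ _ _ _ => abs_add_le _ _

lemma IsNegligible.congr (hf : IsNegligible a b f) (h : ∀ s t, f s t = g s t) :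
    IsNegligible a b g := by
  rwa [← funext₂ h]

lemma IsNegligible.neg (hf : IsNegligible a b f) : IsNegligible a b fun s t => -f s t := by
  simpa only [IsNegligible, abs_neg] using hf

lemma IsNegligible.bdd_mul (hX : IsBounded (X '' Set.Icc a b)) (hf : IsNegligible a b f) :
    IsNegligible a b fun s t => X s * f s t := by
  obtain ⟨C, hC⟩ := hX.exists_norm_le
  refine hf.of_abs_le_mul (C := C) fun s t has hst htb => ?_
  rw [abs_mul]
  gcongr
  exact hC _ (mem_image_of_mem X ⟨has, hst.trans htb⟩)

lemma IsNegligible.exists_abs_le_one (hf : IsNegligible a b f) :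
    ∃ δ > 0, ∀ s t, a ≤ s → s ≤ t → t ≤ b → t - s < δ → |f s t| ≤ 1 := by
  obtain ⟨δ, hδ, hsum⟩ := eventually_meshToZero.1 (hf.eventually_le_const zero_lt_one)
  refine ⟨δ, hδ, fun s t has hst htb hlen => ?_⟩
  obtain ⟨π, hπ⟩ := exists_mesh_lt hδ has
  obtain ⟨ρ, hρ⟩ := exists_mesh_lt hδ htb
  have h := hsum ((π.snoc hst).append ρ)
    ((mesh_append _ _).trans_lt (max_lt (max_lt hπ hlen) hρ))
  rw [sum_append, IntervalPartition.sum] at h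
  linarith [π.sum_nonneg fun s t => abs_nonneg (f s t), ρ.sum_nonneg fun s t => abs_nonneg (f s t)]

lemma IsNegligible.eq_of_mem_Icc (hF : IsNegligible a b fun s t => F t - F s) {t : ℝ}
    (ht : t ∈ Set.Icc a b) : F t = F a := by
  have := meshToZero_neBot ht.1
  have := meshToZero_neBot ht.2
  have h : |F t - F a| ≤ 0 := ge_of_tendsto' (hF.comp (tendsto_append (b := t))) fun p => by
    rw [Function.comp_apply, sum_append]
    exact (abs_sub_le_sum F p.1).trans
      (le_add_of_nonneg_right (p.2.sum_nonneg fun _ _ => abs_nonneg _))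
  exact sub_eq_zero.1 (abs_nonpos_iff.1 h)

lemma isBounded_image_Icc_of_short_increments {δ : ℝ} (hδ : 0 < δ) (hab : a ≤ b)
    (h : ∀ s ∈ Set.Icc a b, ∃ C, ∀ t ∈ Set.Icc s b, t - s < δ → |F t - F s| ≤ C) :
    IsBounded (F '' Set.Icc a b) := by
  obtain ⟨π, hπ⟩ := exists_mesh_lt hδ hab
  induction π with
  | nil => simp
  | @snoc b c π hbc ih =>
    obtain ⟨hπ, hlen⟩ := max_lt_iff.1 hπ
    have hleft : IsBounded (F '' Set.Icc a b) := ih π.le (fun s hs => by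
      obtain ⟨C, hC⟩ := h s ⟨hs.1, hs.2.trans hbc⟩
      exact ⟨C, fun t ht => hC t ⟨ht.1, ht.2.trans hbc⟩⟩) hπ
    obtain ⟨C, hC⟩ := h b ⟨π.le, hbc⟩
    have hright : IsBounded (F '' Set.Icc b c) := by
      refine (Metric.isBounded_closedBall (x := F b) (r := C)).subset ?_
      rintro _ ⟨t, ht, rfl⟩
      exact hC t ht (by linarith [ht.2])
    rw [← Set.Icc_union_Icc_eq_Icc π.le hbc, Set.image_union]
    exact hleft.union hright

/-- The quadratic variation of `X` on `[a, b]` along partitions of vanishing mesh is zero. -/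
def HasZeroQuadVar (a b : ℝ) (X : ℝ → ℝ) : Prop :=
  IsNegligible a b fun s t => (X t - X s) ^ 2

lemma HasZeroQuadVar.isNegligible_mul (hX : HasZeroQuadVar a b X) (hY : HasZeroQuadVar a b Y) :
    IsNegligible a b fun s t => (X t - X s) * (Y t - Y s) := by
  refine (IsNegligible.add hX hY).of_abs_le fun s t _ _ _ => ?_
  rw [abs_of_nonneg (add_nonneg (sq_nonneg (X t - X s)) (sq_nonneg (Y t - Y s))), abs_le]
  constructor <;>
    nlinarith [sq_nonneg (X t - X s - (Y t - Y s)), sq_nonneg (X t - X s + (Y t - Y s))]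

lemma HasFinitePVar.exists_sum_rpow_le {q : ℝ} (hq : 0 < q) (hX : HasFinitePVar q a b X) :
    ∃ K, ∀ π : IntervalPartition a b, π.sum (fun s t => |X t - X s| ^ q) ≤ K := by
  obtain ⟨M, hM⟩ := hX
  refine ⟨M ^ q, fun π => ?_⟩
  obtain ⟨n, t, ht_mono, ht_zero, ht_last, -, ht_sum⟩ := π.exists_sequence
  have hnonneg : 0 ≤ π.sum fun s t => |X t - X s| ^ q := π.sum_nonneg fun _ _ => by positivity
  have hle : (π.sum fun s t => |X t - X s| ^ q) ^ (1 / q) ≤ M :=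
    hM ⟨n, t, ht_mono, ht_zero, ht_last, by rw [ht_sum]⟩
  rw [one_div] at hle
  exact (Real.rpow_inv_le_iff_of_pos hnonneg ((Real.rpow_nonneg hnonneg _).trans hle) hq).1 hle

lemma HasFinitePVar.isNegligible_rpow {q r : ℝ} (hq : 0 < q) (hqr : q < r)
    (hX : HasFinitePVar q a b X) (hcont : ContinuousOn X (Set.Icc a b)) :
    IsNegligible a b fun s t => |X t - X s| ^ r := by
  obtain ⟨K, hK⟩ := hX.exists_sum_rpow_le hq
  refine tendsto_order.2 ⟨fun ε hε => .of_forall fun π =>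
    hε.trans_le (π.sum_nonneg fun _ _ => abs_nonneg _), fun ε hε => ?_⟩
  obtain ⟨c, hcε, hc⟩ : ∃ c, c ^ (r - q) * K < ε ∧ 0 < c := by
    have hlim : Tendsto (fun c : ℝ => c ^ (r - q) * K) (𝓝 0) (𝓝 0) := by
      simpa only [Real.zero_rpow (sub_pos.2 hqr).ne', zero_mul] using
        (Real.continuousAt_rpow_const 0 (r - q) (.inr (sub_pos.2 hqr).le)).tendsto.mul_const K
    exact (((hlim.mono_left nhdsWithin_le_nhds).eventually_lt_const hε).and
      (self_mem_nhdsWithin (s := Set.Ioi 0))).exists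
  obtain ⟨δ, hδ, hosc⟩ := Metric.uniformContinuousOn_iff.1
    (isCompact_Icc.uniformContinuousOn_of_continuous hcont) c hc
  refine eventually_meshToZero.2 ⟨δ, hδ, fun π hπ => ?_⟩
  calc π.sum (fun s t => |(|X t - X s| ^ r)|)
      ≤ π.sum fun s t => c ^ (r - q) * |X t - X s| ^ q := by
        refine π.sum_le_sum fun s t has hst htb hlen => ?_
        have hle : |X t - X s| ≤ c := (hosc t ⟨has.trans hst, htb⟩ s ⟨has, hst.trans htb⟩ (by
          rw [Real.dist_eq, abs_of_nonneg (sub_nonneg.2 hst)]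
          exact hlen.trans_lt hπ)).le
        calc |(|X t - X s| ^ r)| = |X t - X s| ^ (r - q) * |X t - X s| ^ q := by
              rw [abs_of_nonneg (by positivity), ← Real.rpow_add_of_nonneg (abs_nonneg _)
                (sub_pos.2 hqr).le hq.le, sub_add_cancel]
          _ ≤ c ^ (r - q) * |X t - X s| ^ q := by gcongr
    _ = c ^ (r - q) * π.sum fun s t => |X t - X s| ^ q := π.sum_const_mul _
    _ ≤ c ^ (r - q) * K := by gcongr; exact hK π
    _ < ε := hcε

lemma HasFinitePVar.hasZeroQuadVar {q : ℝ} (hq : 0 < q) (hq2 : q < 2)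
    (hX : HasFinitePVar q a b X) (hcont : ContinuousOn X (Set.Icc a b)) :
    HasZeroQuadVar a b X := by
  simpa only [HasZeroQuadVar, Real.rpow_two, sq_abs] using hX.isNegligible_rpow hq hq2 hcont

end Negligible

section SaksHenstock

variable {a b : ℝ} {F : ℝ → ℝ} {g : ℝ → ℝ → ℝ}

lemma tendsto_sum_selected_errors {e : ℝ → ℝ → ℝ} (hab : a ≤ b)
    (hF : ∀ s t, a ≤ s → s ≤ t → t ≤ b → Tendsto (sum g) (meshToZero s t) (𝓝 (F t - F s)))
    (he : ∀ s t, e s t = F t - F s - g s t ∨ e s t = 0) :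
    Tendsto (sum e) (meshToZero a b) (𝓝 0) := by
  refine Metric.nhds_basis_closedBall.tendsto_right_iff.2 fun ε hε => ?_
  obtain ⟨δ, hδ, hball⟩ := eventually_meshToZero.1
    ((hF a b le_rfl hab le_rfl).eventually (Metric.closedBall_mem_nhds _ hε))
  refine eventually_meshToZero.2 ⟨δ, hδ, fun π hπ => ?_⟩
  have hsubset : closure (fineSums g δ a b) ⊆ Metric.closedBall (F b - F a) ε :=
    closure_minimal (image_subset_iff.2 hball) Metric.isClosed_closedBall
  have hmem := hsubset (sub_sum_mem_closure_fineSums π hπ (fun s t has hst htb =>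
    mem_closure_fineSums_of_tendsto hδ hst (hF s t has hst htb)) he)
  simpa [Real.dist_eq] using hmem

/-- The Saks–Henstock lemma: the positive and the negative parts of the error vanish separately. -/
lemma isNegligible_error (hab : a ≤ b)
    (hF : ∀ s t, a ≤ s → s ≤ t → t ≤ b → Tendsto (sum g) (meshToZero s t) (𝓝 (F t - F s))) :
    IsNegligible a b fun s t => F t - F s - g s t := by
  have hpos := tendsto_sum_selected_errors (e := fun s t => max (F t - F s - g s t) 0) hab hF
    fun _ _ => max_choice _ _
  have hneg := tendsto_sum_selected_errors (e := fun s t => min (F t - F s - g s t) 0) hab hF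
    fun _ _ => min_choice _ _
  have hsplit (x : ℝ) : |x| = max x 0 + -1 * min x 0 := by
    rw [neg_one_mul, ← sub_eq_add_neg, max_sub_min_eq_abs', sub_zero]
  simpa only [IsNegligible, hsplit, sum_add, sum_const_mul, mul_zero, add_zero] using
    hpos.add (hneg.const_mul (-1))

end SaksHenstock

section Young

variable {a b : ℝ} {X Y F : ℝ → ℝ}

lemma IsYoungIntegral.tendsto_sum {I : ℝ} (h : IsYoungIntegral a b X Y I) :
    Tendsto (sum fun s t => X s * (Y t - Y s)) (meshToZero a b) (𝓝 I) := by
  refine Metric.tendsto_nhds.2 fun ε hε => ?_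
  obtain ⟨δ, hδ, hsum⟩ := h ε hε
  refine eventually_meshToZero.2 ⟨δ, hδ, fun π hπ => ?_⟩
  obtain ⟨n, t, ht_mono, ht_zero, ht_last, ht_mesh, ht_sum⟩ := π.exists_sequence
  rw [ht_sum]
  exact hsum n t ht_mono ht_zero ht_last fun i hi => (ht_mesh i hi).trans_lt hπ

lemma IsYoungIntegral.eq_zero_of_refl {I : ℝ} (h : IsYoungIntegral a a X Y I) : I = 0 := by
  have := meshToZero_neBot (le_refl a)
  simpa only [sub_self] using
    tendsto_nhds_unique h.tendsto_sum (tendsto_sum_sub le_rfl h.tendsto_sum h.tendsto_sum)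

/-- The increments of `F` have the left-point expansion expressed by `dF = X dY`. -/
def HasYoungDifferential (a b : ℝ) (X Y F : ℝ → ℝ) : Prop :=
  IsNegligible a b fun s t => F t - F s - X s * (Y t - Y s)

lemma hasYoungDifferential_of_isYoungIntegral (hab : a ≤ b)
    (hF : ∀ t ∈ Set.Icc a b, IsYoungIntegral a t X Y (F t)) : HasYoungDifferential a b X Y F :=
  isNegligible_error hab fun s t has hst htb =>
    tendsto_sum_sub has (hF s ⟨has, hst.trans htb⟩).tendsto_sum
      (hF t ⟨has.trans hst, htb⟩).tendsto_sum

namespace HasYoungDifferential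

lemma isBounded (hab : a ≤ b) (hF : HasYoungDifferential a b X Y F) (hY : HasZeroQuadVar a b Y) :
    IsBounded (F '' Set.Icc a b) := by
  obtain ⟨δ, hδ, herror⟩ := hF.exists_abs_le_one
  obtain ⟨δ', hδ', hsq⟩ := hY.exists_abs_le_one
  refine isBounded_image_Icc_of_short_increments (lt_min hδ hδ') hab fun s hs =>
    ⟨1 + |X s|, fun t ht hlen => ?_⟩
  have herror := herror s t hs.1 ht.1 ht.2 (hlen.trans_le (min_le_left _ _))
  have hsq := hsq s t hs.1 ht.1 ht.2 (hlen.trans_le (min_le_right _ _))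
  have hinc : |Y t - Y s| ≤ 1 := by rwa [abs_pow, sq_le_one_iff₀ (abs_nonneg _)] at hsq
  calc |F t - F s| = |(F t - F s - X s * (Y t - Y s)) + X s * (Y t - Y s)| := by
        rw [sub_add_cancel]
    _ ≤ |F t - F s - X s * (Y t - Y s)| + |X s| * |Y t - Y s| := by
        rw [← abs_mul]; exact abs_add_le _ _
    _ ≤ 1 + |X s| := add_le_add herror (mul_le_of_le_one_right (abs_nonneg _) hinc)

lemma hasZeroQuadVar (hF : HasYoungDifferential a b X Y F) (hX : IsBounded (X '' Set.Icc a b))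
    (hF_bdd : IsBounded (F '' Set.Icc a b)) (hY : HasZeroQuadVar a b Y) :
    HasZeroQuadVar a b F := by
  obtain ⟨C, hC⟩ := Metric.isBounded_iff.1 hF_bdd
  have hcross : IsNegligible a b fun s t =>
      (F t - F s) * (F t - F s - X s * (Y t - Y s)) := by
    refine hF.of_abs_le_mul (C := C) fun s t has hst htb => ?_
    rw [abs_mul]
    gcongr
    exact hC (mem_image_of_mem F ⟨has.trans hst, htb⟩) (mem_image_of_mem F ⟨has, hst.trans htb⟩)
  refine (((hY.bdd_mul hX).bdd_mul hX).add (hcross.add hcross)).of_abs_le fun s t _ _ _ => ?_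
  rw [abs_of_nonneg (sq_nonneg _)]
  refine le_trans ?_ (le_abs_self _)
  linarith [sq_nonneg (F t - F s - X s * (Y t - Y s))]

lemma of_mul {Z G : ℝ → ℝ} (hF : HasYoungDifferential a b (fun t => Z t * X t) Y F)
    (hG : HasYoungDifferential a b X Y G) (hZ : IsBounded (Z '' Set.Icc a b)) :
    HasYoungDifferential a b Z G F :=
  (hF.add (hG.bdd_mul hZ).neg).congr fun s t => by ring

end HasYoungDifferential

lemma abs_exp_sub_one_sub_id_le_sq_mul_exp_abs (x : ℝ) :
    |Real.exp x - 1 - x| ≤ x ^ 2 * Real.exp |x| := by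
  have h := Complex.norm_exp_sub_sum_le_norm_mul_exp (x : ℂ) 2
  norm_num [Finset.sum_range_succ, ← sub_sub] at h
  exact_mod_cast h

lemma isBounded_image_neg {s : Set ℝ} (hF : IsBounded (F '' s)) :
    IsBounded ((fun t => -F t) '' s) := by
  simpa only [← Set.image_neg_eq_neg, Set.image_image] using hF.neg

lemma isBounded_image_exp {s : Set ℝ} (hF : IsBounded (F '' s)) :
    IsBounded ((fun t => Real.exp (F t)) '' s) := by
  obtain ⟨C, hC⟩ := hF.exists_norm_le
  refine isBounded_iff_forall_norm_le.2 ⟨Real.exp C, forall_mem_image.2 fun t ht => ?_⟩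
  rw [Real.norm_eq_abs, Real.abs_exp]
  exact Real.exp_le_exp.2 ((le_abs_self _).trans (hC _ (mem_image_of_mem F ht)))

lemma HasZeroQuadVar.hasYoungDifferential_exp (hF : HasZeroQuadVar a b F)
    (hF_bdd : IsBounded (F '' Set.Icc a b)) :
    HasYoungDifferential a b (fun t => Real.exp (F t)) F (fun t => Real.exp (F t)) := by
  obtain ⟨C, hC⟩ := Metric.isBounded_iff.1 hF_bdd
  have hremainder : IsNegligible a b fun s t => Real.exp (F t - F s) - 1 - (F t - F s) := by
    refine IsNegligible.of_abs_le_mul (C := Real.exp C) hF fun s t has hst htb => ?_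
    rw [abs_of_nonneg (sq_nonneg (F t - F s)), mul_comm]
    refine (abs_exp_sub_one_sub_id_le_sq_mul_exp_abs _).trans ?_
    gcongr
    exact hC (mem_image_of_mem F ⟨has.trans hst, htb⟩) (mem_image_of_mem F ⟨has, hst.trans htb⟩)
  refine (hremainder.bdd_mul (isBounded_image_exp hF_bdd)).congr fun s t => ?_
  rw [Real.exp_sub]
  field_simp

/-- Product rule: `d(y exp Γ) = y d(exp Γ) + exp Γ dy = 0`. -/
lemma isNegligible_mul_exp_sub {Γ y : ℝ → ℝ} (hab : a ≤ b)
    (hΓ_bdd : IsBounded (Γ '' Set.Icc a b)) (hΓ : HasZeroQuadVar a b Γ)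
    (hy : HasYoungDifferential a b (fun t => -y t) Γ y) :
    IsNegligible a b fun s t => y t * Real.exp (Γ t) - y s * Real.exp (Γ s) := by
  have hy_bdd := hy.isBounded hab hΓ
  have hexp_bdd := isBounded_image_exp hΓ_bdd
  have hexp := hΓ.hasYoungDifferential_exp hΓ_bdd
  have hy_qv : HasZeroQuadVar a b y := hy.hasZeroQuadVar (isBounded_image_neg hy_bdd) hy_bdd hΓ
  have hexp_qv : HasZeroQuadVar a b fun t => Real.exp (Γ t) :=
    hexp.hasZeroQuadVar hexp_bdd hexp_bdd hΓ
  refine (((hexp.bdd_mul hy_bdd).add (hy.bdd_mul hexp_bdd)).add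
    (hy_qv.isNegligible_mul hexp_qv)).congr fun s t => ?_
  ring

end Young

theorem linear_young_ode_solution_general {a b : ℝ} {η α Γ y : ℝ → ℝ}
    (hη : HasZeroQuadVar a b η) (hα : IsBounded (α '' Set.Icc a b))
    (hΓ : ∀ t ∈ Set.Icc a b, IsYoungIntegral a t α η (Γ t))
    (hy : ∀ t ∈ Set.Icc a b, IsYoungIntegral a t (fun r => α r * y r) η (y a - y t)) :
    ∀ t ∈ Set.Icc a b, y t = y a * Real.exp (-Γ t) := by
  intro t ht
  have hab : a ≤ b := ht.1.trans ht.2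
  have hdΓ := hasYoungDifferential_of_isYoungIntegral hab hΓ
  have hΓ_bdd := hdΓ.isBounded hab hη
  have hΓ_qv : HasZeroQuadVar a b Γ := hdΓ.hasZeroQuadVar hα hΓ_bdd hη
  have hdy_η : HasYoungDifferential a b (fun r => -y r * α r) η y :=
    (hasYoungDifferential_of_isYoungIntegral hab hy).neg.congr fun s t => by ring
  have hdy : HasYoungDifferential a b (fun r => -y r) Γ y :=
    hdy_η.of_mul hdΓ (isBounded_image_neg (hdy_η.isBounded hab hη))
  have hconst : y t * Real.exp (Γ t) = y a * Real.exp (Γ a) :=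
    (isNegligible_mul_exp_sub hab hΓ_bdd hΓ_qv hdy).eq_of_mem_Icc ht
  have hΓa : Γ a = 0 := (hΓ a ⟨le_rfl, hab⟩).eq_zero_of_refl
  rw [Real.exp_neg, eq_mul_inv_iff_mul_eq₀ (Real.exp_ne_zero _), hconst, hΓa, Real.exp_zero,
    mul_one]

/-- explicit solution of the linear Young ODE `dy_t = -α_t y_t dη_t`. -/
theorem linear_young_ode_solution (T : ℝ) (hT : 0 < T) (p q : ℝ)
    (hq1 : 1 ≤ q) (hq2 : q < 2) (hp : 1 ≤ p) (hpq : 1 / p + 1 / q > 1)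
    (η α Γ y : ℝ → ℝ)
    (hη : ContinuousOn η (Set.Icc 0 T)) (hα : ContinuousOn α (Set.Icc 0 T))
    (hy : ContinuousOn y (Set.Icc 0 T))
    (hfη : HasFinitePVar q 0 T η) (hfα : HasFinitePVar p 0 T α)
    (hfy : HasFinitePVar p 0 T y)
    (hΓ : ∀ t ∈ Set.Icc (0 : ℝ) T, IsYoungIntegral 0 t α η (Γ t))
    (hyeq : ∀ t ∈ Set.Icc (0 : ℝ) T,
      IsYoungIntegral 0 t (fun r => α r * y r) η (y 0 - y t)) :
    ∀ t ∈ Set.Icc (0 : ℝ) T, y t = y 0 * Real.exp (-Γ t) := by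
  exact linear_young_ode_solution_general (hfη.hasZeroQuadVar (zero_lt_one.trans_le hq1) hq2 hη)
    (isCompact_Icc.image_of_continuousOn hα).isBounded hΓ hyeq
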